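/- Fix d ≥ 2, m > 0, exponents γ < 2m, σ < 2m − 1, ω < 2m − 2, and constants A > 0, K ≥ 1, ε > 0. There exist constants ε₀ > 0, C > 0, c₂ ≥ 1 and ρ₀ ≥ 1, depending only on d, m, γ, σ, ω, A, K, ε, such that the following holds for all ρ ≥ ρ₀. Let δ > 0 satisfy δ ρ^{2−2m+2ε} ≤ ε₀, let b ∈ ℝ^d with c₂ ≤ |b| ≤ Kρ, and let G₁, G₂ : ℝ^d → ℝ be twice continuously differentiable functions satisfying, for all ξ ∈ ℝ^d and j = 1, 2: |G_j(ξ)| ≤ A ρ^γ, |∇G_j(ξ)| ≤ A ρ^σ, |∇²G_j(ξ)| ≤ A ρ^ω, |G₁(ξ) − G₂(ξ − b)| ≤ A |b| ρ^σ, and |∇G₁(ξ) − ∇G₂(ξ − b)| ≤ A |b| ρ^ω. Set g_j(ξ) = |ξ|^{2m} + G_j(ξ) and 𝒳 = 𝒜(g₁; ρ, δ) ∩ (𝒜(g₂; ρ, δ) + b). Then the Lebesgue measure of 𝒳 satisfies vol(𝒳) ≤ C (δ² ρ^{4−4m+d+6ε} + δ ρ^{1−2m−ε(d−1)}). -/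

import Mathlib

noncomputable section

open Set Submodule Module MeasureTheory Relation
open scoped RealInnerProductSpace

variable {d : ℕ}

/-- The lattice Γ generated over ℤ by the basis `B` of ℝ^d. -/
def latticeOf (B : Basis (Fin d) ℝ (EuclideanSpace ℝ (Fin d))) :
    Submodule ℤ (EuclideanSpace ℝ (Fin d)) :=
  Submodule.span ℤ (Set.range B)

/-- The determinant d(Γ) of the lattice generated by `B`. -/
def latDet (B : Basis (Fin d) ℝ (EuclideanSpace ℝ (Fin d))) : ℝ :=
  |(EuclideanSpace.basisFun (Fin d) ℝ).toBasis.det (fun i => B i)|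

/-- The dual lattice Γ† = {θ : θ·g ∈ 2πℤ for all g ∈ Γ}. -/
def dualLattice (B : Basis (Fin d) ℝ (EuclideanSpace ℝ (Fin d))) :
    Set (EuclideanSpace ℝ (Fin d)) :=
  {θ | ∀ g ∈ latticeOf B, ∃ k : ℤ, ⟪θ, g⟫ = 2 * Real.pi * k}

/-- Θ_r : nonzero dual lattice vectors of norm at most r. -/
def Theta (B : Basis (Fin d) ℝ (EuclideanSpace ℝ (Fin d))) (r : ℝ) :
    Set (EuclideanSpace ℝ (Fin d)) :=
  {θ | θ ∈ dualLattice B ∧ θ ≠ 0 ∧ ‖θ‖ ≤ r}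

/-- Θ_r⁰ : dual lattice vectors of norm at most r (including 0). -/
def Theta0 (B : Basis (Fin d) ℝ (EuclideanSpace ℝ (Fin d))) (r : ℝ) :
    Set (EuclideanSpace ℝ (Fin d)) :=
  {θ | θ ∈ dualLattice B ∧ ‖θ‖ ≤ r}

/-- A lattice r-subspace: a subspace spanned by dual lattice vectors from Θ_r⁰. -/
def IsLatticeSubspace (B : Basis (Fin d) ℝ (EuclideanSpace ℝ (Fin d))) (r : ℝ)
    (V : Submodule ℝ (EuclideanSpace ℝ (Fin d))) : Prop :=
  ∃ S : Set (EuclideanSpace ℝ (Fin d)), S ⊆ Theta0 B r ∧ V = Submodule.span ℝ S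

/-- Orthogonal projection ξ_V onto a subspace, viewed in the ambient space. -/
def projV (V : Submodule ℝ (EuclideanSpace ℝ (Fin d))) (ξ : EuclideanSpace ℝ (Fin d)) :
    EuclideanSpace ℝ (Fin d) :=
  (orthogonalProjection V ξ : EuclideanSpace ℝ (Fin d))

/-- ω_n: the volume of the unit ball in ℝ^n. -/
def unitBallVol (n : ℕ) : ℝ :=
  (MeasureTheory.volume (Metric.ball (0 : EuclideanSpace ℝ (Fin n)) 1)).toReal

/-- The resonant layer Λ(θ) (= ℝ^d when θ = 0). -/
def layer (ρ a : ℝ) (θ : EuclideanSpace ℝ (Fin d)) : Set (EuclideanSpace ℝ (Fin d)) :=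
  {ξ | θ = 0 ∨ |⟪ξ, θ⟫| < ρ ^ a * ‖θ‖}

/-- Υ_θ(ξ): the points θ-resonant congruent to ξ. -/
def upsTheta (ρ a : ℝ) (θ ξ : EuclideanSpace ℝ (Fin d)) : Set (EuclideanSpace ℝ (Fin d)) :=
  {η | ξ ∈ layer ρ a θ ∧ η ∈ layer ρ a θ ∧ ∃ l : ℤ, ξ - η = (l : ℝ) • θ}

/-- One step of resonant congruence (with some θ ∈ Θ_r⁰). -/
def resStep (B : Basis (Fin d) ℝ (EuclideanSpace ℝ (Fin d))) (ρ a r : ℝ)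
    (ξ η : EuclideanSpace ℝ (Fin d)) : Prop :=
  ∃ θ ∈ Theta0 B r, η ∈ upsTheta ρ a θ ξ

/-- Υ(ξ): all points resonant congruent to ξ. -/
def Ups (B : Basis (Fin d) ℝ (EuclideanSpace ℝ (Fin d))) (ρ a r : ℝ)
    (ξ : EuclideanSpace ℝ (Fin d)) : Set (EuclideanSpace ℝ (Fin d)) :=
  {η | Relation.ReflTransGen (resStep B ρ a r) ξ η}

/-- N(ξ) = Υ(ξ) − ξ. -/
def resN (B : Basis (Fin d) ℝ (EuclideanSpace ℝ (Fin d))) (ρ a r : ℝ)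
    (ξ : EuclideanSpace ℝ (Fin d)) : Set (EuclideanSpace ℝ (Fin d)) :=
  {m | ξ + m ∈ Ups B ρ a r ξ}

/-- Ξ₁(V) = {ξ : |ξ_V| < ρ^{α_n}}, n = dim V. -/
def Xi1 (ρ : ℝ) (α : ℕ → ℝ) (V : Submodule ℝ (EuclideanSpace ℝ (Fin d))) :
    Set (EuclideanSpace ℝ (Fin d)) :=
  {ξ | ‖projV V ξ‖ < ρ ^ α (Module.finrank ℝ V)}

/-- Ξ₂(V) = ∪_{ξ ∈ Ξ₁(V)} Υ(ξ). -/
def Xi2 (B : Basis (Fin d) ℝ (EuclideanSpace ℝ (Fin d))) (ρ r : ℝ) (α : ℕ → ℝ)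
    (V : Submodule ℝ (EuclideanSpace ℝ (Fin d))) : Set (EuclideanSpace ℝ (Fin d)) :=
  {η | ∃ ξ ∈ Xi1 ρ α V, η ∈ Ups B ρ (α 1) r ξ}

/-- Ξ(V): Ξ₂(V) minus the Ξ₂(W) for all lattice r-subspaces W of larger dimension. -/
def Xi (B : Basis (Fin d) ℝ (EuclideanSpace ℝ (Fin d))) (ρ r : ℝ) (α : ℕ → ℝ)
    (V : Submodule ℝ (EuclideanSpace ℝ (Fin d))) : Set (EuclideanSpace ℝ (Fin d)) :=
  Xi2 B ρ r α V \
    ⋃ W ∈ {W : Submodule ℝ (EuclideanSpace ℝ (Fin d)) |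
        IsLatticeSubspace B r W ∧ Module.finrank ℝ V < Module.finrank ℝ W},
      Xi2 B ρ r α W

/-- The standing conditions on the parameters ρ ≥ 1, r, κ > 0 and the exponents α_j:
0 = α₀, α_{n+1} > α_n + 2κd², α_d < 1, r ≤ ρ^κ, and r ≥ r₀ (i.e. Θ_r⁰ spans ℝ^d). -/
def GoodParams (B : Basis (Fin d) ℝ (EuclideanSpace ℝ (Fin d))) (ρ r κ : ℝ)
    (α : ℕ → ℝ) : Prop :=
  1 ≤ ρ ∧ 0 < κ ∧ α 0 = 0 ∧ (∀ n < d, α n + 2 * κ * (d : ℝ) ^ 2 < α (n + 1)) ∧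
    α d < 1 ∧ r ≤ ρ ^ κ ∧ Submodule.span ℝ (Theta0 B r) = ⊤

open scoped ENNReal Pointwise

/- Dilating by `ρ⁻¹` and replacing `‖x‖ ^ s = 1 - G x` by `‖x‖ ^ 2 = (1 - G x) ^ (2 / s)` reduces
the problem to level sets of `‖x‖ ^ 2 + H x` with `H` small in `C^{1,1}`. At a common point of a
shell and a shifted shell, the difference of the two normals is close to the shift, so they are
never nearly parallel. Where they are not nearly antiparallel either, the shells meet transversally
and each small patch of the intersection has measure of order `δ ^ 2`. The points with nearly
antiparallel normals are within distance `ν` of each other, so they lie in a piece of a single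
shell of measure of order `δ * ν ^ (n - 1)`. -/

section Volume

variable {E : Type*} [NormedAddCommGroup E] [InnerProductSpace ℝ E] [FiniteDimensional ℝ E]
  [MeasurableSpace E] [BorelSpace E]

lemma volume_le_ediam_pow_finrank (S : Set E) :
    volume S ≤ Metric.ediam S ^ finrank ℝ E := by
  let e := (stdOrthonormalBasis ℝ E).measurableEquiv.trans (MeasurableEquiv.toLp 2 _).symm
  have he : MeasurePreserving e volume volume :=
    (stdOrthonormalBasis ℝ E).measurePreserving_measurableEquiv.trans
      (PiLp.volume_preserving_ofLp _)
  have hlip : LipschitzWith 1 e :=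
    ((PiLp.lipschitzWith_ofLp 2 _).comp (stdOrthonormalBasis ℝ E).repr.lipschitz).weaken
      (mul_one 1).le
  calc volume S = volume (e '' S) := by
        rw [e.image_eq_preimage_symm, he.symm.measure_preimage_equiv]
    _ ≤ Metric.ediam (e '' S) ^ finrank ℝ E := by
        simpa using Real.volume_pi_le_diam_pow (e '' S)
    _ ≤ Metric.ediam S ^ finrank ℝ E := by
        gcongr
        simpa using hlip.ediam_image_le S

lemma volume_le_of_slices (W : Submodule ℝ E) {S : Set E} (hS : MeasurableSet S) {D r : ℝ≥0∞}
    (hr : Metric.ediam S ≤ r) (hD : ∀ x ∈ S, ∀ y ∈ S, x - y ∈ W → edist x y ≤ D) :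
    volume S ≤ D ^ finrank ℝ W * r ^ finrank ℝ Wᗮ := by
  let e : E ≃ᵐ W × Wᗮ := W.measurableEquivProd (0 : E)
  have he : MeasurePreserving e volume volume := by
    simpa only [InnerProductSpace.euclideanHausdorffMeasure_eq_volume] using
      W.measurePreserving_measurableEquivProd (0 : E)
  have he_symm (w : W) (z : Wᗮ) : e.symm (w, z) = (w : E) + z := by
    simp [e]
  let base : Set Wᗮ := closure (Wᗮ.orthogonalProjectionOnto '' S)
  let slice (z : Wᗮ) : Set W := (fun w => (w, z)) ⁻¹' (e.symm ⁻¹' S)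
  have hbase : volume base ≤ r ^ finrank ℝ Wᗮ := by
    refine (volume_le_ediam_pow_finrank base).trans ?_
    gcongr
    rw [Metric.ediam_closure]
    refine le_trans ?_ hr
    simpa using (Wᗮ.lipschitzWith_orthogonalProjectionOnto).ediam_image_le S
  have hslice (z : Wᗮ) : volume (slice z) ≤ base.indicator (fun _ => D ^ finrank ℝ W) z := by
    by_cases hz : z ∈ base
    · rw [indicator_of_mem hz]
      refine (volume_le_ediam_pow_finrank (slice z)).trans ?_
      gcongr
      refine Metric.ediam_le fun w hw w' hw' => ?_
      simp only [slice, mem_preimage, he_symm] at hw hw'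
      simpa only [edist_add_right, Subtype.edist_eq] using
        hD _ hw _ hw' (by simpa only [add_sub_add_right_eq_sub] using sub_mem w.2 w'.2)
    · have : slice z = ∅ := by
        refine eq_empty_of_forall_notMem fun w hw => hz (subset_closure ⟨_, hw, ?_⟩)
        simp [he_symm]
      simp [this]
  calc volume S = volume (e.symm ⁻¹' S) := (he.symm.measure_preimage_equiv S).symm
    _ = ∫⁻ z, volume (slice z) := Measure.prod_apply_symm (e.symm.measurable hS)
    _ ≤ ∫⁻ z, base.indicator (fun _ => D ^ finrank ℝ W) z := lintegral_mono hslice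
    _ = D ^ finrank ℝ W * volume base := lintegral_indicator_const isClosed_closure.measurableSet _
    _ ≤ D ^ finrank ℝ W * r ^ finrank ℝ Wᗮ := by gcongr

lemma volume_le_of_forall_inter_closedBall_le {S : Set E} {R r : ℝ} (hR : 0 ≤ R) (hr : 0 < r)
    (hS : S ⊆ Metric.closedBall 0 R) {M : ℝ≥0∞}
    (hM : ∀ c, volume (S ∩ Metric.closedBall c r) ≤ M) :
    volume S ≤ ENNReal.ofReal (((R + r) / r) ^ finrank ℝ E) * M := by
  let T : Set E := toMeasurable volume S ∩ Metric.closedBall 0 R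
  have hT : MeasurableSet T := (measurableSet_toMeasurable _ _).inter measurableSet_closedBall
  have hST : volume S ≤ volume T :=
    measure_mono (subset_inter (subset_toMeasurable volume S) hS)
  let P : Set (E × E) := {p | p.2 ∈ T ∧ dist p.2 p.1 ≤ r}
  have hP : MeasurableSet P :=
    (measurable_snd hT).inter
      (measurableSet_le (measurable_snd.dist measurable_fst) measurable_const)
  have hfst (c : E) : volume (Prod.mk c ⁻¹' P) ≤
      (Metric.closedBall 0 (R + r)).indicator (fun _ => M) c := by
    by_cases hc : c ∈ Metric.closedBall 0 (R + r)
    · rw [indicator_of_mem hc]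
      refine (measure_mono fun x hx => ?_).trans
        ((Measure.measure_toMeasurable_inter_of_sFinite measurableSet_closedBall S).trans_le (hM c))
      exact ⟨hx.1.1, hx.2⟩
    · have : Prod.mk c ⁻¹' P = ∅ := by
        refine eq_empty_of_forall_notMem fun x hx => hc ?_
        exact (dist_triangle_left c 0 x).trans (by linarith [hx.2, Metric.mem_closedBall.1 hx.1.2])
      simp [this]
  have hsnd (x : E) : volume ((fun c => (c, x)) ⁻¹' P) =
      T.indicator (fun _ => volume (Metric.closedBall (0 : E) r)) x := by
    by_cases hx : x ∈ T
    · rw [indicator_of_mem hx, ← Measure.addHaar_closedBall_center volume x r]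
      congr 1
      ext c
      simp [P, hx, dist_comm]
    · simp [P, hx]
  have key : volume (Metric.closedBall (0 : E) r) * volume T ≤
      M * volume (Metric.closedBall (0 : E) (R + r)) :=
    calc _ = ∫⁻ x, volume ((fun c => (c, x)) ⁻¹' P) := by
          simp only [hsnd, lintegral_indicator_const hT]
      _ = ∫⁻ c, volume (Prod.mk c ⁻¹' P) := by
          rw [← Measure.prod_apply hP, ← Measure.prod_apply_symm hP]
      _ ≤ ∫⁻ c, (Metric.closedBall 0 (R + r)).indicator (fun _ => M) c := lintegral_mono hfst
      _ = _ := lintegral_indicator_const measurableSet_closedBall _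
  have hscale : volume (Metric.closedBall (0 : E) (R + r)) =
      ENNReal.ofReal (((R + r) / r) ^ finrank ℝ E) * volume (Metric.closedBall (0 : E) r) := by
    rw [← Measure.addHaar_closedBall_mul volume 0 (by positivity) hr.le,
      div_mul_cancel₀ _ hr.ne']
  rw [hscale, mul_comm, mul_left_comm, ← mul_assoc] at key
  exact hST.trans ((ENNReal.mul_le_mul_iff_left
    (Metric.measure_closedBall_pos volume (0 : E) hr).ne' measure_closedBall_lt_top.ne).1 key)

lemma volume_le_of_orthonormal {ι : Type*} [Fintype ι] {e : ι → E} (he : Orthonormal ℝ e)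
    {S : Set E} {a θ r : ℝ} (hr : ∀ x ∈ S, ∀ y ∈ S, dist x y ≤ r)
    (hθ : Fintype.card ι * θ ≤ 1 / 2)
    (ha : ∀ i, ∀ x ∈ S, ∀ y ∈ S, |⟪e i, x - y⟫| ≤ a + θ * ‖x - y‖) :
    volume S ≤ ENNReal.ofReal
      ((2 * Fintype.card ι * a) ^ Fintype.card ι * r ^ (finrank ℝ E - Fintype.card ι)) := by
  rcases S.eq_empty_or_nonempty with rfl | ⟨x₀, hx₀⟩
  · simp
  have hr₀ : 0 ≤ r := dist_nonneg.trans (hr x₀ hx₀ x₀ hx₀)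
  have ha_closure (i : ι) :
      ∀ x ∈ closure S, ∀ y ∈ closure S, |⟪e i, x - y⟫| ≤ a + θ * ‖x - y‖ := by
    have hclosed : IsClosed {z : E × E | |⟪e i, z.1 - z.2⟫| ≤ a + θ * ‖z.1 - z.2‖} :=
      isClosed_le (by fun_prop) (by fun_prop)
    have hsub : closure S ×ˢ closure S ⊆
        {z : E × E | |⟪e i, z.1 - z.2⟫| ≤ a + θ * ‖z.1 - z.2‖} := by
      rw [← closure_prod_eq]
      exact hclosed.closure_subset_iff.2 fun z hz => ha i _ hz.1 _ hz.2
    exact fun x hx y hy => hsub (mk_mem_prod hx hy)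
  let W := span ℝ (range e)
  have hW : finrank ℝ W = Fintype.card ι := finrank_span_eq_card he.linearIndependent
  have hnorm : ∀ x ∈ closure S, ∀ y ∈ closure S, x - y ∈ W →
      ‖x - y‖ ≤ 2 * Fintype.card ι * a := by
    intro x hx y hy hxy
    obtain ⟨c, hc⟩ := (mem_span_range_iff_exists_fun ℝ).1 hxy
    have : ‖x - y‖ ≤ Fintype.card ι * (a + θ * ‖x - y‖) :=
      calc ‖x - y‖ ≤ ∑ i, ‖c i • e i‖ := hc ▸ norm_sum_le _ _
        _ = ∑ i, |⟪e i, x - y⟫| := by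
            simp only [← hc, he.inner_right_fintype, norm_smul, he.1, mul_one, Real.norm_eq_abs]
        _ ≤ Fintype.card ι * (a + θ * ‖x - y‖) := by
            simpa [mul_add] using
              Finset.sum_le_sum fun i (_ : i ∈ Finset.univ) => ha_closure i x hx y hy
    nlinarith [norm_nonneg (x - y)]
  have ha₀ : 0 ≤ 2 * Fintype.card ι * a :=
    (norm_nonneg _).trans (hnorm x₀ (subset_closure hx₀) x₀ (subset_closure hx₀) (by simp))
  have hdiam : Metric.ediam (closure S) ≤ ENNReal.ofReal r := by
    rw [Metric.ediam_closure]
    exact Metric.ediam_le fun x hx y hy =>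
      (edist_dist x y).trans_le (ENNReal.ofReal_le_ofReal (hr x hx y hy))
  calc volume S ≤ volume (closure S) := measure_mono subset_closure
    _ ≤ _ := volume_le_of_slices W isClosed_closure.measurableSet hdiam fun x hx y hy hxy => by
      rw [edist_dist, dist_eq_norm]
      exact ENNReal.ofReal_le_ofReal (hnorm x hx y hy hxy)
    _ = _ := by
      rw [hW, ← W.finrank_add_finrank_orthogonal, hW, Nat.add_sub_cancel_left,
        ENNReal.ofReal_mul (pow_nonneg ha₀ _), ENNReal.ofReal_pow ha₀, ENNReal.ofReal_pow hr₀]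

lemma volume_le_of_abs_inner_le {p : E} (hp : ‖p‖ = 1) {S : Set E} {a θ r : ℝ}
    (hr : ∀ x ∈ S, ∀ y ∈ S, dist x y ≤ r) (hθ : 2 * θ ≤ 1)
    (ha : ∀ x ∈ S, ∀ y ∈ S, |⟪p, x - y⟫| ≤ a + θ * ‖x - y‖) :
    volume S ≤ ENNReal.ofReal (2 * a * r ^ (finrank ℝ E - 1)) := by
  have he : Orthonormal ℝ fun _ : Unit => p := ⟨fun _ => hp, fun i j hij => (hij rfl).elim⟩
  simpa using volume_le_of_orthonormal he hr (by simp; linarith) fun _ => ha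

lemma volume_le_of_abs_inner_le_of_norm_eq {p q : E} (hpq : ‖p‖ = ‖q‖) {μ : ℝ} (hμ : 0 < μ)
    (hsub : μ ≤ ‖p - q‖) (hadd : μ ≤ ‖p + q‖) {S : Set E} {a θ r : ℝ}
    (hr : ∀ x ∈ S, ∀ y ∈ S, dist x y ≤ r) (hθ : 8 * θ ≤ μ)
    (hp : ∀ x ∈ S, ∀ y ∈ S, |⟪p, x - y⟫| ≤ a + θ * ‖x - y‖)
    (hq : ∀ x ∈ S, ∀ y ∈ S, |⟪q, x - y⟫| ≤ a + θ * ‖x - y‖) :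
    volume S ≤ ENNReal.ofReal ((8 * a / μ) ^ 2 * r ^ (finrank ℝ E - 2)) := by
  have hsub₀ : p - q ≠ 0 := norm_pos_iff.1 (hμ.trans_le hsub)
  have hadd₀ : p + q ≠ 0 := norm_pos_iff.1 (hμ.trans_le hadd)
  have horth : ⟪p - q, p + q⟫ = 0 := by
    rw [real_inner_comm, real_inner_add_sub_eq_zero_iff]
    exact hpq
  have he : Orthonormal ℝ ![NormedSpace.normalize (p - q), NormedSpace.normalize (p + q)] := by
    simp only [orthonormal_vecCons_iff, NormedSpace.norm_normalize_eq_one_iff]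
    simp [NormedSpace.normalize, hsub₀, hadd₀, horth, -smul_add, inner_smul_left, inner_smul_right]
  have hbound {u : E} (hu : μ ≤ ‖u‖) {x y : E} (hxy : |⟪u, x - y⟫| ≤ 2 * (a + θ * ‖x - y‖)) :
      |⟪NormedSpace.normalize u, x - y⟫| ≤ 2 * a / μ + 2 * θ / μ * ‖x - y‖ := by
    rw [NormedSpace.normalize, real_inner_smul_left, abs_mul, abs_of_nonneg (by positivity),
      inv_mul_eq_div]
    calc _ ≤ 2 * (a + θ * ‖x - y‖) / μ := div_le_div₀ ((abs_nonneg _).trans hxy) hxy hμ hu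
      _ = _ := by ring
  have hvol := volume_le_of_orthonormal he hr (a := 2 * a / μ) (θ := 2 * θ / μ)
    (by rw [Fintype.card_fin, ← mul_div_assoc, div_le_iff₀ hμ]; push_cast; linarith)
    fun i x hx y hy => by
      have hp' := abs_le.1 (hp x hx y hy)
      have hq' := abs_le.1 (hq x hx y hy)
      fin_cases i
      · exact hbound hsub (by rw [inner_sub_left, abs_le]; constructor <;> linarith)
      · exact hbound hadd (by rw [inner_add_left, abs_le]; constructor <;> linarith)
  have hconst : 2 * (2 : ℕ) * (2 * a / μ) = 8 * a / μ := by push_cast; ring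
  rwa [Fintype.card_fin, hconst] at hvol

end Volume

section NormalField

variable {E : Type*} [NormedAddCommGroup E] [InnerProductSpace ℝ E]

/-- The unit vector field `n` on `X` is normal to `X` up to thickness `B * δ` and curvature `B`. -/
structure IsApproxNormal (B δ : ℝ) (X : Set E) (n : E → E) : Prop where
  norm_eq_one : ∀ x ∈ X, ‖n x‖ = 1
  abs_inner_le : ∀ c ∈ X, ∀ x ∈ X, ∀ y ∈ X, ∀ R, dist x c ≤ R → dist y c ≤ R →
    |⟪n c, x - y⟫| ≤ B * δ + B * R * ‖x - y‖

lemma IsApproxNormal.mono {B δ : ℝ} {X Y : Set E} {n : E → E} (h : IsApproxNormal B δ X n)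
    (hY : Y ⊆ X) : IsApproxNormal B δ Y n :=
  ⟨fun x hx => h.norm_eq_one x (hY hx),
    fun c hc x hx y hy => h.abs_inner_le c (hY hc) x (hY hx) y (hY hy)⟩

lemma IsApproxNormal.comp_sub_right {B δ : ℝ} {X : Set E} {n : E → E}
    (h : IsApproxNormal B δ X n) (b : E) :
    IsApproxNormal B δ ((· - b) ⁻¹' X) fun x => n (x - b) where
  norm_eq_one x hx := h.norm_eq_one _ hx
  abs_inner_le c hc x hx y hy R hxc hyc := by
    simpa using h.abs_inner_le _ hc _ hx _ hy R (by simpa using hxc) (by simpa using hyc)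

variable [FiniteDimensional ℝ E] [MeasurableSpace E] [BorelSpace E] {B δ ν : ℝ} {X : Set E}
  {n₁ n₂ : E → E}

lemma IsApproxNormal.volume_le_of_dist_le {n : E → E} (hn : IsApproxNormal B δ X n)
    (hν : 2 * (B * ν) ≤ 1) (hX : ∀ x ∈ X, ∀ y ∈ X, dist x y ≤ ν) :
    volume X ≤ ENNReal.ofReal (2 * (B * δ) * ν ^ (finrank ℝ E - 1)) := by
  rcases X.eq_empty_or_nonempty with rfl | ⟨c, hc⟩
  · simp
  exact volume_le_of_abs_inner_le (hn.norm_eq_one c hc) hX hν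
    fun x hx y hy => hn.abs_inner_le c hc x hx y hy ν (hX x hx c hc) (hX y hy c hc)

lemma IsApproxNormal.volume_le_of_transversal (hE : 2 ≤ finrank ℝ E)
    (h₁ : IsApproxNormal B δ X n₁) (h₂ : IsApproxNormal B δ X n₂) (hB : 1 ≤ B) (hν₀ : 0 < ν)
    (hν : ν ≤ 1) (hX : X ⊆ Metric.closedBall 0 2) (hsub : ∀ x ∈ X, ν / 2 ≤ ‖n₁ x - n₂ x‖)
    (hadd : ∀ x ∈ X, ν / 2 ≤ ‖n₁ x + n₂ x‖) :
    volume X ≤ ENNReal.ofReal (16 ^ 4 * B ^ 4 * 6 ^ finrank ℝ E * (δ ^ 2 / ν ^ 4)) := by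
  have : 0 < B := by linarith
  set r := ν / (32 * B) with hr
  have hr₀ : 0 < r := by positivity
  have hr₁ : r ≤ 1 := (div_le_one (by positivity)).2 (by linarith)
  have hBr : 32 * (B * r) = ν := by rw [hr]; field_simp
  have hpatch (c : E) : volume (X ∩ Metric.closedBall c r) ≤
      ENNReal.ofReal ((16 * (B * δ) / ν) ^ 2 * (2 * r) ^ (finrank ℝ E - 2)) := by
    rcases (X ∩ Metric.closedBall c r).eq_empty_or_nonempty with h | ⟨x₀, hx₀⟩
    · simp [h]
    have hdist : ∀ x ∈ X ∩ Metric.closedBall c r, ∀ y ∈ X ∩ Metric.closedBall c r,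
        dist x y ≤ 2 * r := fun x hx y hy =>
      (dist_triangle_right x y c).trans
        (by linarith [Metric.mem_closedBall.1 hx.2, Metric.mem_closedBall.1 hy.2])
    have hflat {n : E → E} (h : IsApproxNormal B δ X n) :
        ∀ x ∈ X ∩ Metric.closedBall c r, ∀ y ∈ X ∩ Metric.closedBall c r,
          |⟪n x₀, x - y⟫| ≤ B * δ + B * (2 * r) * ‖x - y‖ := fun x hx y hy =>
      h.abs_inner_le x₀ hx₀.1 x hx.1 y hy.1 _ (hdist x hx x₀ hx₀) (hdist y hy x₀ hx₀)
    have := volume_le_of_abs_inner_le_of_norm_eq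
      ((h₁.norm_eq_one x₀ hx₀.1).trans (h₂.norm_eq_one x₀ hx₀.1).symm) (half_pos hν₀)
      (hsub x₀ hx₀.1) (hadd x₀ hx₀.1) hdist (by linarith) (hflat h₁) (hflat h₂)
    convert this using 4
    ring
  refine (volume_le_of_forall_inter_closedBall_le zero_le_two hr₀ hX hpatch).trans ?_
  rw [← ENNReal.ofReal_mul (by positivity)]
  refine ENNReal.ofReal_le_ofReal ?_
  obtain ⟨k, hk⟩ := Nat.exists_eq_add_of_le hE
  calc _ ≤ (3 / r) ^ finrank ℝ E * ((16 * (B * δ) / ν) ^ 2 * (2 * r) ^ (finrank ℝ E - 2)) := by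
        gcongr
        linarith
    _ = (3 / r) ^ 2 * (16 * (B * δ) / ν) ^ 2 * (3 / r * (2 * r)) ^ k := by
        rw [hk, Nat.add_sub_cancel_left, pow_add, mul_mul_mul_comm, ← mul_pow _ _ k]
    _ = _ := by
        rw [show 3 / r * (2 * r) = 6 by field_simp; norm_num, hk, hr]
        field_simp
        ring

/-- Points with nearly antiparallel normals are `ν`-close because `n₁ + n₂` expands distances; at
the remaining points the two normals are transversal. -/
lemma IsApproxNormal.volume_le (hE : 2 ≤ finrank ℝ E)
    (h₁ : IsApproxNormal B δ X n₁) (h₂ : IsApproxNormal B δ X n₂) (hB : 1 ≤ B) (hν₀ : 0 < ν)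
    (hν : 2 * (B * ν) ≤ 1) (hδ : 0 ≤ δ) (hX : X ⊆ Metric.closedBall 0 2)
    (hn₁ : ∀ x ∈ X, ∀ y ∈ X, ‖n₁ x - n₁ y - (x - y)‖ ≤ (‖x - y‖ + ν) / 4)
    (hn₂ : ∀ x ∈ X, ∀ y ∈ X, ‖n₂ x - n₂ y - (x - y)‖ ≤ (‖x - y‖ + ν) / 4)
    (hsub : ∀ x ∈ X, ν / 2 ≤ ‖n₁ x - n₂ x‖) :
    volume X ≤ ENNReal.ofReal
      (16 ^ 4 * B ^ 4 * 6 ^ finrank ℝ E * (δ ^ 2 / ν ^ 4 + δ * ν ^ (finrank ℝ E - 1))) := by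
  let T := {x ∈ X | ‖n₁ x + n₂ x‖ ≤ ν / 2}
  let U := {x ∈ X | ν / 2 ≤ ‖n₁ x + n₂ x‖}
  have hTU : X ⊆ U ∪ T := fun x hx => (le_total (ν / 2) ‖n₁ x + n₂ x‖).imp (.intro hx) (.intro hx)
  have hT : volume T ≤ ENNReal.ofReal (2 * (B * δ) * ν ^ (finrank ℝ E - 1)) := by
    refine (h₁.mono (sep_subset _ _)).volume_le_of_dist_le hν fun x hx y hy => ?_
    have hexp : (2 : ℝ) • (x - y) = (n₁ x + n₂ x) - (n₁ y + n₂ y) -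
        (n₁ x - n₁ y - (x - y)) - (n₂ x - n₂ y - (x - y)) := by module
    have hle : ‖(2 : ℝ) • (x - y)‖ ≤ ν / 2 + ν / 2 + (‖x - y‖ + ν) / 4 + (‖x - y‖ + ν) / 4 := by
      rw [hexp]
      exact norm_sub_le_of_le (norm_sub_le_of_le (norm_sub_le_of_le hx.2 hy.2)
        (hn₁ x hx.1 y hy.1)) (hn₂ x hx.1 y hy.1)
    rw [norm_smul, Real.norm_two] at hle
    rw [dist_eq_norm]
    linarith
  have hU := volume_le_of_transversal (ν := ν) hE (h₁.mono (sep_subset _ _))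
    (h₂.mono (sep_subset _ _)) hB hν₀ (by nlinarith) ((sep_subset _ _).trans hX)
    (fun x hx => hsub x hx.1) fun x (hx : x ∈ U) => hx.2
  calc volume X ≤ volume U + volume T := (measure_mono hTU).trans (measure_union_le _ _)
    _ ≤ _ := add_le_add hU hT
    _ ≤ _ := by
      rw [← ENNReal.ofReal_add (by positivity) (by positivity)]
      refine ENNReal.ofReal_le_ofReal ?_
      have hC : 2 * B ≤ 16 ^ 4 * B ^ 4 * 6 ^ finrank ℝ E := by
        have hB₄ : B ≤ B ^ 4 := le_self_pow₀ hB (by norm_num)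
        have h₆ : 1 ≤ (6 : ℝ) ^ finrank ℝ E := one_le_pow₀ (by norm_num)
        nlinarith
      have := mul_le_mul_of_nonneg_right hC (by positivity : 0 ≤ δ * ν ^ (finrank ℝ E - 1))
      linarith

end NormalField

lemma norm_half_smul {E : Type*} [NormedAddCommGroup E] [NormedSpace ℝ E] (v : E) :
    ‖(1 / 2 : ℝ) • v‖ = ‖v‖ / 2 := by
  rw [norm_smul, Real.norm_of_nonneg (by norm_num), one_div_mul_eq_div]

lemma norm_normalize_sub_normalize_sub_sub_le {E : Type*} [NormedAddCommGroup E] [NormedSpace ℝ E]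
    {a : E} (ha : a ≠ 0) (a' : E) :
    ‖NormedSpace.normalize a - NormedSpace.normalize a' - (a - a')‖ ≤
      (|1 - ‖a‖| * ‖a - a'‖ + |‖a‖ - ‖a'‖|) / ‖a‖ := by
  have ha₀ : ‖a‖ ≠ 0 := norm_ne_zero_iff.2 ha
  have hdecomp : NormedSpace.normalize a - NormedSpace.normalize a' - (a - a') =
      ‖a‖⁻¹ • ((1 - ‖a‖) • (a - a') - (‖a‖ - ‖a'‖) • NormedSpace.normalize a') := by
    rw [NormedSpace.normalize]
    linear_combination (norm := skip) -‖a‖⁻¹ • NormedSpace.norm_smul_normalize a'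
    match_scalars <;> field_simp <;> ring
  have hnorm : ‖NormedSpace.normalize a'‖ ≤ 1 := by
    rw [NormedSpace.normalize, norm_smul, norm_inv, norm_norm]
    exact inv_mul_le_one
  rw [hdecomp, norm_smul, norm_inv, norm_norm, inv_mul_eq_div]
  gcongr
  refine norm_sub_le_of_le (norm_smul _ _).le ?_
  simpa [norm_smul] using mul_le_of_le_one_right (abs_nonneg _) hnorm

section InnerProductSpace

variable {E : Type*} [NormedAddCommGroup E] [InnerProductSpace ℝ E]

lemma abs_norm_add_sub_norm_add_mul_le (y z e e' : E) :
    |‖y + e‖ - ‖z + e'‖| * (‖y + e‖ + ‖z + e'‖) ≤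
      |‖y‖ ^ 2 - ‖z‖ ^ 2| + ‖y - z‖ * ‖e + e'‖ + ‖e - e'‖ * (‖y + e‖ + ‖z + e'‖) :=
  calc |‖y + e‖ - ‖z + e'‖| * (‖y + e‖ + ‖z + e'‖) = |‖y + e‖ ^ 2 - ‖z + e'‖ ^ 2| := by
        rw [sq_sub_sq, abs_mul, abs_of_nonneg (a := _ + _) (by positivity), mul_comm]
    _ = |‖y‖ ^ 2 - ‖z‖ ^ 2 + ⟪y - z, e + e'⟫ + ⟪e - e', (y + e) + (z + e')⟫| := by
        congr 1
        simp only [← real_inner_self_eq_norm_sq, inner_add_left, inner_add_right, inner_sub_left]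
        rw [real_inner_comm e y, real_inner_comm e z, real_inner_comm e' y, real_inner_comm e' z,
          real_inner_comm e' e]
        ring
    _ ≤ |‖y‖ ^ 2 - ‖z‖ ^ 2| + ‖y - z‖ * ‖e + e'‖ + ‖e - e'‖ * (‖y + e‖ + ‖z + e'‖) :=
        (abs_add_three _ _ _).trans (add_le_add_three le_rfl (abs_real_inner_le_norm _ _)
          ((abs_real_inner_le_norm _ _).trans (by gcongr; exact norm_add_le _ _)))

lemma norm_normalize_add_sub_normalize_add_sub_sub_le {y z e e' : E} {δ : ℝ} (hδ : 0 ≤ δ)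
    (hy : |‖y + e‖ - 1| ≤ 1 / 30) (hz : |‖z + e'‖ - 1| ≤ 1 / 30) (hadd : ‖e + e'‖ ≤ 1 / 100)
    (hsub : ‖e - e'‖ ≤ 1 / 200 * ‖y - z‖) (hsq : |‖y‖ ^ 2 - ‖z‖ ^ 2| ≤ 2 * δ + 1 / 100 * ‖y - z‖) :
    ‖NormedSpace.normalize (y + e) - NormedSpace.normalize (z + e') - (y - z)‖ ≤
      (‖y - z‖ + 16 * δ) / 4 := by
  have hD := norm_nonneg (y - z)
  have hy' : 29 / 30 ≤ ‖y + e‖ := by linarith [(abs_le.1 hy).1]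
  have hz' : 29 / 30 ≤ ‖z + e'‖ := by linarith [(abs_le.1 hz).1]
  have hdiff : ‖(y + e) - (z + e')‖ ≤ (1 + 1 / 200) * ‖y - z‖ := by
    rw [add_sub_add_comm]
    linarith [norm_add_le (y - z) (e - e')]
  have hnorm : |‖y + e‖ - ‖z + e'‖| ≤ 2 * δ + 1 / 40 * ‖y - z‖ := by
    refine le_of_mul_le_mul_right ((abs_norm_add_sub_norm_add_mul_le y z e e').trans ?_)
      (by linarith : 0 < ‖y + e‖ + ‖z + e'‖)
    nlinarith
  have hne : y + e ≠ 0 := norm_pos_iff.1 (by linarith)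
  have hdecomp : NormedSpace.normalize (y + e) - NormedSpace.normalize (z + e') - (y - z) =
      (NormedSpace.normalize (y + e) - NormedSpace.normalize (z + e') - ((y + e) - (z + e'))) +
        (e - e') := by abel
  calc ‖NormedSpace.normalize (y + e) - NormedSpace.normalize (z + e') - (y - z)‖
      ≤ (1 / 30 * ((1 + 1 / 200) * ‖y - z‖) + (2 * δ + 1 / 40 * ‖y - z‖)) / (29 / 30) +
          1 / 200 * ‖y - z‖ := by
        rw [hdecomp]
        refine norm_add_le_of_le
          ((norm_normalize_sub_normalize_sub_sub_le hne _).trans ?_) hsub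
        rw [abs_sub_comm 1]
        gcongr
    _ ≤ (‖y - z‖ + 16 * δ) / 4 := by linarith

end InnerProductSpace

lemma exists_abs_rpow_sub_le (p : ℝ) {a b : ℝ} (ha : 0 < a) :
    ∃ L : ℝ, 0 ≤ L ∧ ∀ u ∈ Icc a b, ∀ v ∈ Icc a b, |u ^ p - v ^ p| ≤ L * |u - v| := by
  have hc : ContDiffOn ℝ 1 (fun u : ℝ => u ^ p) (Icc a b) := fun u hu =>
    (Real.contDiffAt_rpow_const_of_ne (ha.trans_le hu.1).ne').contDiffWithinAt
  obtain ⟨L, hL⟩ := hc.exists_lipschitzOnWith one_ne_zero (convex_Icc a b) isCompact_Icc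
  exact ⟨L, L.2, fun u hu v hv => by simpa [Real.dist_eq] using hL.dist_le_mul u hu v hv⟩

/-- On the interval `[1/2, 3/2]` the function `u ↦ u ^ p` and its derivative are Lipschitz with
constant `L`, which also bounds the derivative. The condition `1 ≤ L` is a normalization. -/
structure RpowBounds (p L : ℝ) : Prop where
  one_le : 1 ≤ L
  abs_sub_le : ∀ u ∈ Icc (1 / 2 : ℝ) (3 / 2), ∀ v ∈ Icc (1 / 2 : ℝ) (3 / 2),
    |u ^ p - v ^ p| ≤ L * |u - v|
  abs_deriv_le : ∀ u ∈ Icc (1 / 2 : ℝ) (3 / 2), |p * u ^ (p - 1)| ≤ L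
  abs_deriv_sub_le : ∀ u ∈ Icc (1 / 2 : ℝ) (3 / 2), ∀ v ∈ Icc (1 / 2 : ℝ) (3 / 2),
    |p * u ^ (p - 1) - p * v ^ (p - 1)| ≤ L * |u - v|

lemma exists_rpowBounds (p : ℝ) : ∃ L, RpowBounds p L := by
  obtain ⟨L₁, hL₁, h₁⟩ := exists_abs_rpow_sub_le (a := 1 / 2) (b := 3 / 2) p (by norm_num)
  obtain ⟨L₂, hL₂, h₂⟩ := exists_abs_rpow_sub_le (a := 1 / 2) (b := 3 / 2) (p - 1) (by norm_num)
  have hp := abs_nonneg p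
  have hpL₂ : 0 ≤ |p| * L₂ := by positivity
  refine ⟨1 + L₁ + |p| * (1 + L₂), by linarith, fun u hu v hv => (h₁ u hu v hv).trans ?_,
    fun u hu => ?_, fun u hu v hv => ?_⟩
  · gcongr
    linarith
  · have hu₁ := h₂ u hu 1 (by norm_num)
    have : |u ^ (p - 1)| ≤ 1 + L₂ := by
      rw [Real.one_rpow] at hu₁
      have : L₂ * |u - 1| ≤ L₂ * 1 := by
        gcongr
        exact abs_sub_le_iff.2 ⟨by linarith [hu.2], by linarith [hu.1]⟩
      linarith [abs_sub_abs_le_abs_sub (u ^ (p - 1)) 1, abs_one (α := ℝ)]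
    rw [abs_mul]
    linarith [mul_le_mul_of_nonneg_left this hp]
  · calc |p * u ^ (p - 1) - p * v ^ (p - 1)| ≤ |p| * (L₂ * |u - v|) := by
          rw [← mul_sub, abs_mul]
          gcongr
          exact h₂ u hu v hv
      _ ≤ (1 + L₁ + |p| * (1 + L₂)) * |u - v| := by
          rw [← mul_assoc]
          gcongr
          linarith

section Shell

variable {E : Type*} [NormedAddCommGroup E] {s ρ κ δ : ℝ} {G H : E → ℝ}

/-- The set `𝒜(g; ρ, δ)` for `g ξ = ‖ξ‖ ^ s + G ξ`. -/
def shell (s ρ δ : ℝ) (G : E → ℝ) : Set E :=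
  {ξ | ρ ^ s - δ ≤ ‖ξ‖ ^ s + G ξ ∧ ‖ξ‖ ^ s + G ξ ≤ ρ ^ s + δ}

lemma mem_shell_two_one_iff {x : E} : x ∈ shell 2 1 δ H ↔ |‖x‖ ^ 2 + H x - 1| ≤ δ := by
  simp only [shell, mem_ofPred_eq, Real.rpow_two, abs_sub_le_iff]
  constructor <;> rintro ⟨_, _⟩ <;> constructor <;> linarith

lemma abs_norm_sub_one_le {x : E} (hx : x ∈ shell 2 1 δ H) (hH : |H x| ≤ κ) :
    |‖x‖ - 1| ≤ κ + δ := by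
  rw [mem_shell_two_one_iff] at hx
  calc |‖x‖ - 1| ≤ |‖x‖ - 1| * (‖x‖ + 1) :=
        le_mul_of_one_le_right (abs_nonneg _) (by linarith [norm_nonneg x])
    _ = |(‖x‖ ^ 2 + H x - 1) - H x| := by
        rw [← abs_of_nonneg (by positivity : 0 ≤ ‖x‖ + 1), ← abs_mul]
        ring_nf
    _ ≤ κ + δ := (abs_sub _ _).trans (by linarith)

lemma shell_two_one_subset_closedBall (hH : ∀ x, |H x| ≤ κ) (hκ : κ + δ ≤ 1) :
    shell 2 1 δ H ⊆ Metric.closedBall 0 2 := fun x hx => by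
  rw [mem_closedBall_zero_iff]
  linarith [(abs_le.1 (abs_norm_sub_one_le hx (hH x))).2]

lemma one_sub_mem_Icc {x : ℝ} (hx : |x| ≤ 1 / 2) : 1 - x ∈ Icc (1 / 2 : ℝ) (3 / 2) := by
  rw [abs_le] at hx
  constructor <;> linarith

/-- The perturbation of `‖x‖ ^ 2` whose unit level set agrees with that of `‖x‖ ^ s + G x`. -/
def quadraticPerturbation {E : Type*} (s : ℝ) (G : E → ℝ) (x : E) : ℝ :=
  1 - (1 - G x) ^ (2 / s)

lemma RpowBounds.abs_quadraticPerturbation_sub_le {α : Type*} {s L : ℝ} {G G' : α → ℝ}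
    {x y : α} (hL : RpowBounds (2 / s) L) (hx : |G x| ≤ 1 / 2) (hy : |G' y| ≤ 1 / 2) :
    |quadraticPerturbation s G x - quadraticPerturbation s G' y| ≤ L * |G x - G' y| := by
  simpa only [quadraticPerturbation, sub_sub_sub_cancel_left, abs_sub_comm] using
    hL.abs_sub_le _ (one_sub_mem_Icc hx) _ (one_sub_mem_Icc hy)

lemma shell_one_subset_shell_two_one {L : ℝ} (hs : 0 < s)
    (hL : RpowBounds (2 / s) L) (hG : ∀ x, |G x| + δ ≤ 1 / 2) :
    shell s 1 δ G ⊆ shell 2 1 (L * δ) (quadraticPerturbation s G) := by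
  intro x hx
  simp only [shell, mem_ofPred_eq, Real.one_rpow] at hx
  have hδ : |(‖x‖ ^ s) - (1 - G x)| ≤ δ := abs_sub_le_iff.2 ⟨by linarith, by linarith⟩
  have hxs : ‖x‖ ^ s ∈ Icc (1 / 2 : ℝ) (3 / 2) := by
    constructor <;> linarith [hG x, le_abs_self (G x), neg_abs_le (G x)]
  have hnorm : ‖x‖ ^ 2 = (‖x‖ ^ s) ^ (2 / s) := by
    rw [← Real.rpow_mul (norm_nonneg x), mul_div_cancel₀ _ hs.ne', Real.rpow_two]
  rw [mem_shell_two_one_iff, quadraticPerturbation, hnorm]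
  calc |(‖x‖ ^ s) ^ (2 / s) + (1 - (1 - G x) ^ (2 / s)) - 1|
      = |(‖x‖ ^ s) ^ (2 / s) - (1 - G x) ^ (2 / s)| := by ring_nf
    _ ≤ L * |‖x‖ ^ s - (1 - G x)| :=
      hL.abs_sub_le _ hxs _ (one_sub_mem_Icc (by linarith [hG x, (abs_nonneg _).trans hδ]))
    _ ≤ L * δ := mul_le_mul_of_nonneg_left hδ (zero_le_one.trans hL.one_le)

/-- The function corresponding to `G` after the dilation of the sphere of radius `ρ` to the unit
sphere. -/
def unitRescale {E : Type*} [SMul ℝ E] (s ρ : ℝ) (G : E → ℝ) (x : E) : ℝ :=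
  ρ ^ (-s) * G (ρ • x)

lemma smul_mem_shell_iff [NormedSpace ℝ E] (hρ : 0 < ρ) {x : E} :
    ρ • x ∈ shell s ρ δ G ↔ x ∈ shell s 1 (ρ ^ (-s) * δ) (unitRescale s ρ G) := by
  have hpos : 0 < ρ ^ (-s) := by positivity
  have hone : ρ ^ (-s) * ρ ^ s = 1 := by rw [← Real.rpow_add hρ, neg_add_cancel, Real.rpow_zero]
  have hnorm : ‖x‖ ^ s = ρ ^ (-s) * ‖ρ • x‖ ^ s := by
    rw [norm_smul, Real.norm_of_nonneg hρ.le, Real.mul_rpow hρ.le (norm_nonneg _), ← mul_assoc,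
      hone, one_mul]
  simp only [shell, unitRescale, mem_ofPred_eq, Real.one_rpow, hnorm]
  rw [← hone, ← mul_sub, ← mul_add, ← mul_add, mul_le_mul_iff_right₀ hpos,
    mul_le_mul_iff_right₀ hpos]

end Shell

section HasC11Bounds

variable {E : Type*} [NormedAddCommGroup E] [InnerProductSpace ℝ E] [CompleteSpace E]
  {a₀ a₁ a₂ b₀ b₁ b₂ s ρ κ δ L : ℝ} {G G' H H' : E → ℝ} {x y : E}

/-- `G` is a `C^{1,1}` function: `a₀` bounds its values, `a₁` its gradient and `a₂` is a Lipschitz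
constant of its gradient. -/
structure HasC11Bounds (a₀ a₁ a₂ : ℝ) (G : E → ℝ) : Prop where
  differentiable : Differentiable ℝ G
  abs_apply_le : ∀ x, |G x| ≤ a₀
  norm_gradient_le : ∀ x, ‖gradient G x‖ ≤ a₁
  norm_gradient_sub_le : ∀ x y, ‖gradient G x - gradient G y‖ ≤ a₂ * ‖x - y‖

lemma HasC11Bounds.mono (hG : HasC11Bounds a₀ a₁ a₂ G) (h₀ : a₀ ≤ b₀)
    (h₁ : a₁ ≤ b₁) (h₂ : a₂ ≤ b₂) : HasC11Bounds b₀ b₁ b₂ G where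
  differentiable := hG.differentiable
  abs_apply_le x := (hG.abs_apply_le x).trans h₀
  norm_gradient_le x := (hG.norm_gradient_le x).trans h₁
  norm_gradient_sub_le x y := (hG.norm_gradient_sub_le x y).trans (by gcongr)

lemma HasC11Bounds.of_contDiff (hG : ContDiff ℝ 2 G) (h₀ : ∀ x, |G x| ≤ a₀)
    (h₁ : ∀ x, ‖gradient G x‖ ≤ a₁) (h₂ : ∀ x, ‖fderiv ℝ (fderiv ℝ G) x‖ ≤ a₂) :
    HasC11Bounds a₀ a₁ a₂ G where
  differentiable := hG.differentiable two_ne_zero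
  abs_apply_le := h₀
  norm_gradient_le := h₁
  norm_gradient_sub_le x y := by
    have hdiff : Differentiable ℝ (fderiv ℝ G) :=
      (hG.fderiv_right (m := 1) (by norm_num)).differentiable one_ne_zero
    rw [gradient, gradient, ← map_sub, LinearIsometryEquiv.norm_map]
    exact convex_univ.norm_image_sub_le_of_norm_fderiv_le (fun z _ => hdiff z) (fun z _ => h₂ z)
      (mem_univ y) (mem_univ x)

lemma HasC11Bounds.abs_apply_sub_le (hG : HasC11Bounds a₀ a₁ a₂ G) (x y : E) :
    |G x - G y| ≤ a₁ * ‖x - y‖ := by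
  refine convex_univ.norm_image_sub_le_of_norm_hasFDerivWithin_le
    (fun z _ => (hG.differentiable z).hasGradientAt.hasFDerivAt.hasFDerivWithinAt)
    (fun z _ => ?_) (mem_univ y) (mem_univ x)
  simpa only [LinearIsometryEquiv.norm_map] using hG.norm_gradient_le z

lemma HasC11Bounds.abs_apply_sub_sub_inner_le (hG : HasC11Bounds a₀ a₁ a₂ G) (ha₂ : 0 ≤ a₂)
    {c x y : E} {R : ℝ} (hx : dist x c ≤ R) (hy : dist y c ≤ R) :
    |G x - G y - ⟪gradient G c, x - y⟫| ≤ a₂ * R * ‖x - y‖ := by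
  refine (convex_closedBall c R).norm_image_sub_le_of_norm_hasFDerivWithin_le'
    (φ := InnerProductSpace.toDual ℝ E (gradient G c))
    (fun z _ => (hG.differentiable z).hasGradientAt.hasFDerivAt.hasFDerivWithinAt)
    (fun z hz => ?_) hy hx
  rw [← map_sub, LinearIsometryEquiv.norm_map]
  refine (hG.norm_gradient_sub_le z c).trans ?_
  rw [← dist_eq_norm]
  gcongr
  exact hz

lemma hasGradientAt_unitRescale (hρ : 0 < ρ) {x : E} (hG : DifferentiableAt ℝ G (ρ • x)) :
    HasGradientAt (unitRescale s ρ G) (ρ ^ (1 - s) • gradient G (ρ • x)) x := by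
  have h := (hG.hasGradientAt.hasFDerivAt.comp x ((hasFDerivAt_id x).const_smul ρ)).const_mul
    (ρ ^ (-s))
  rw [hasGradientAt_iff_hasFDerivAt]
  refine HasFDerivAt.congr_fderiv h ?_
  ext v
  rw [← neg_add_eq_sub, Real.rpow_add_one hρ.ne']
  simp [mul_assoc]

lemma HasC11Bounds.unitRescale (hG : HasC11Bounds a₀ a₁ a₂ G) (hρ : 0 < ρ) :
    HasC11Bounds (ρ ^ (-s) * a₀) (ρ ^ (1 - s) * a₁) (ρ ^ (2 - s) * a₂) (unitRescale s ρ G) where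
  differentiable x := (hasGradientAt_unitRescale hρ (hG.differentiable _)).differentiableAt
  abs_apply_le x := by
    rw [_root_.unitRescale, abs_mul, abs_of_pos (Real.rpow_pos_of_pos hρ _)]
    gcongr
    exact hG.abs_apply_le _
  norm_gradient_le x := by
    rw [(hasGradientAt_unitRescale hρ (hG.differentiable _)).gradient, norm_smul,
      Real.norm_of_nonneg (by positivity)]
    gcongr
    exact hG.norm_gradient_le _
  norm_gradient_sub_le x y := by
    have h := hG.norm_gradient_sub_le (ρ • x) (ρ • y)
    rw [← smul_sub, norm_smul, Real.norm_of_nonneg hρ.le] at h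
    rw [(hasGradientAt_unitRescale hρ (hG.differentiable _)).gradient,
      (hasGradientAt_unitRescale hρ (hG.differentiable _)).gradient, ← smul_sub, norm_smul,
      Real.norm_of_nonneg (by positivity)]
    calc ρ ^ (1 - s) * ‖gradient G (ρ • x) - gradient G (ρ • y)‖
        ≤ ρ ^ (1 - s) * (a₂ * (ρ * ‖x - y‖)) := by gcongr
      _ = ρ ^ (2 - s) * a₂ * ‖x - y‖ := by
        rw [show 2 - s = 1 - s + 1 by ring, Real.rpow_add_one hρ.ne']
        ring

lemma hasGradientAt_quadraticPerturbation (hG : DifferentiableAt ℝ G x) (hx : |G x| ≤ 1 / 2) :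
    HasGradientAt (quadraticPerturbation s G)
      ((2 / s * (1 - G x) ^ (2 / s - 1)) • gradient G x) x := by
  have hne : 1 - G x ≠ 0 := by linarith [(abs_le.1 hx).2]
  rw [hasGradientAt_iff_hasFDerivAt]
  refine (((hG.hasGradientAt.hasFDerivAt.const_sub 1).rpow_const (Or.inl hne)).const_sub
    1).congr_fderiv ?_
  simp

lemma RpowBounds.norm_gradient_quadraticPerturbation_le (hL : RpowBounds (2 / s) L)
    (hG : DifferentiableAt ℝ G x) (hx : |G x| ≤ 1 / 2) :
    ‖gradient (quadraticPerturbation s G) x‖ ≤ L * ‖gradient G x‖ := by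
  rw [(hasGradientAt_quadraticPerturbation hG hx).gradient, norm_smul]
  gcongr
  exact hL.abs_deriv_le _ (one_sub_mem_Icc hx)

lemma RpowBounds.norm_gradient_quadraticPerturbation_sub_le (hL : RpowBounds (2 / s) L)
    (hG : DifferentiableAt ℝ G x) (hG' : DifferentiableAt ℝ G' y)
    (hx : |G x| ≤ 1 / 2) (hy : |G' y| ≤ 1 / 2) :
    ‖gradient (quadraticPerturbation s G) x - gradient (quadraticPerturbation s G') y‖ ≤
      L * (‖gradient G x - gradient G' y‖ + |G x - G' y| * ‖gradient G' y‖) := by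
  rw [(hasGradientAt_quadraticPerturbation hG hx).gradient,
    (hasGradientAt_quadraticPerturbation hG' hy).gradient]
  set c := 2 / s * (1 - G x) ^ (2 / s - 1)
  set c' := 2 / s * (1 - G' y) ^ (2 / s - 1)
  have hsub : |c - c'| ≤ L * |G x - G' y| := by
    simpa only [sub_sub_sub_cancel_left, abs_sub_comm] using
      hL.abs_deriv_sub_le _ (one_sub_mem_Icc hx) _ (one_sub_mem_Icc hy)
  calc ‖c • gradient G x - c' • gradient G' y‖
      = ‖c • (gradient G x - gradient G' y) + (c - c') • gradient G' y‖ := by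
        congr 1
        module
    _ ≤ L * ‖gradient G x - gradient G' y‖ + L * |G x - G' y| * ‖gradient G' y‖ := by
        refine norm_add_le_of_le ?_ ?_ <;> rw [norm_smul] <;> gcongr
        · exact hL.abs_deriv_le _ (one_sub_mem_Icc hx)
        · exact hsub
    _ = _ := by ring

lemma HasC11Bounds.quadraticPerturbation (hG : HasC11Bounds a₀ a₁ a₂ G) (ha₀ : a₀ ≤ 1 / 2)
    (hL : RpowBounds (2 / s) L) :
    HasC11Bounds (L * a₀) (L * a₁) (L * (a₂ + a₁ ^ 2)) (quadraticPerturbation s G) := by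
  have hL₀ : 0 ≤ L := zero_le_one.trans hL.one_le
  have hhalf (x : E) : |G x| ≤ 1 / 2 := (hG.abs_apply_le x).trans ha₀
  refine ⟨fun x => ?_, fun x => ?_, fun x => ?_, fun x y => ?_⟩
  · exact (hasGradientAt_quadraticPerturbation (hG.differentiable x) (hhalf x)).differentiableAt
  · have h := hL.abs_quadraticPerturbation_sub_le (G' := (0 : E → ℝ)) (y := x) (hhalf x) (by simp)
    simp only [_root_.quadraticPerturbation, Pi.zero_apply, sub_zero, Real.one_rpow, sub_self] at h
    exact h.trans (mul_le_mul_of_nonneg_left (hG.abs_apply_le x) hL₀)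
  · exact (hL.norm_gradient_quadraticPerturbation_le (hG.differentiable x) (hhalf x)).trans
      (mul_le_mul_of_nonneg_left (hG.norm_gradient_le x) hL₀)
  · refine (hL.norm_gradient_quadraticPerturbation_sub_le (hG.differentiable x)
      (hG.differentiable y) (hhalf x) (hhalf y)).trans ?_
    rw [mul_assoc]
    gcongr
    calc ‖gradient G x - gradient G y‖ + |G x - G y| * ‖gradient G y‖
        ≤ a₂ * ‖x - y‖ + a₁ * ‖x - y‖ * a₁ := by
          have ha₁ : 0 ≤ a₁ := (norm_nonneg _).trans (hG.norm_gradient_le x)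
          gcongr
          exacts [hG.norm_gradient_sub_le x y, hG.abs_apply_sub_le x y, hG.norm_gradient_le y]
      _ = (a₂ + a₁ ^ 2) * ‖x - y‖ := by ring

/-- The unit normal of the level sets of `x ↦ ‖x‖ ^ 2 + H x`. -/
def shellNormal (H : E → ℝ) (x : E) : E :=
  NormedSpace.normalize (x + (1 / 2 : ℝ) • gradient H x)

lemma HasC11Bounds.abs_norm_add_half_gradient_sub_one_le (hH : HasC11Bounds a₀ a₁ a₂ H) {x : E}
    (hx : x ∈ shell 2 1 δ H) :
    |‖x + (1 / 2 : ℝ) • gradient H x‖ - 1| ≤ a₀ + a₁ / 2 + δ := by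
  have hadd := abs_norm_sub_norm_le (x + (1 / 2 : ℝ) • gradient H x) x
  rw [add_sub_cancel_left, norm_half_smul] at hadd
  calc |‖x + (1 / 2 : ℝ) • gradient H x‖ - 1|
      ≤ |‖x + (1 / 2 : ℝ) • gradient H x‖ - ‖x‖| + |‖x‖ - 1| := abs_sub_le _ _ _
    _ ≤ a₀ + a₁ / 2 + δ := by
      linarith [abs_norm_sub_one_le hx (hH.abs_apply_le x), hH.norm_gradient_le x]

lemma HasC11Bounds.norm_shellNormal_sub_sub_le {y z : E} (hδ : δ ≤ 1 / 96)
    (hH : HasC11Bounds (1 / 100) (1 / 100) (1 / 100) H)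
    (hH' : HasC11Bounds (1 / 100) (1 / 100) (1 / 100) H')
    (hdiff : |H y - H' z| ≤ 1 / 100 * ‖y - z‖)
    (hgrad : ‖gradient H y - gradient H' z‖ ≤ 1 / 100 * ‖y - z‖)
    (hy : y ∈ shell 2 1 δ H) (hz : z ∈ shell 2 1 δ H') :
    ‖shellNormal H y - shellNormal H' z - (y - z)‖ ≤ (‖y - z‖ + 16 * δ) / 4 := by
  have hy' := mem_shell_two_one_iff.1 hy
  have hz' := mem_shell_two_one_iff.1 hz
  refine norm_normalize_add_sub_normalize_add_sub_sub_le ((abs_nonneg _).trans hy')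
    ((hH.abs_norm_add_half_gradient_sub_one_le hy).trans (by linarith))
    ((hH'.abs_norm_add_half_gradient_sub_one_le hz).trans (by linarith)) ?_ ?_ ?_
  · rw [← smul_add, norm_half_smul]
    linarith [norm_add_le_of_le (hH.norm_gradient_le y) (hH'.norm_gradient_le z)]
  · rw [← smul_sub, norm_half_smul]
    linarith
  · calc |‖y‖ ^ 2 - ‖z‖ ^ 2|
        = |(‖y‖ ^ 2 + H y - 1) - (‖z‖ ^ 2 + H' z - 1) - (H y - H' z)| := by ring_nf
      _ ≤ δ + δ + 1 / 100 * ‖y - z‖ :=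
        (abs_sub _ _).trans (add_le_add ((abs_sub _ _).trans (add_le_add hy' hz')) hdiff)
      _ = 2 * δ + 1 / 100 * ‖y - z‖ := by ring

lemma HasC11Bounds.abs_inner_add_half_gradient_le (hH : HasC11Bounds a₀ a₁ κ H) (hκ : 0 ≤ κ)
    {c x y : E} {R : ℝ} (hx : x ∈ shell 2 1 δ H) (hy : y ∈ shell 2 1 δ H)
    (hxc : dist x c ≤ R) (hyc : dist y c ≤ R) :
    |⟪c + (1 / 2 : ℝ) • gradient H c, x - y⟫| ≤ δ + (1 + κ / 2) * R * ‖x - y‖ := by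
  have hid : 2 * ⟪c + (1 / 2 : ℝ) • gradient H c, x - y⟫ =
      (‖x‖ ^ 2 + H x - 1) - (‖y‖ ^ 2 + H y - 1) - ⟪(x - c) + (y - c), x - y⟫ -
        (H x - H y - ⟪gradient H c, x - y⟫) := by
    have hsq : ⟪x + y, x - y⟫ = ‖x‖ ^ 2 - ‖y‖ ^ 2 := by
      rw [inner_add_left, inner_sub_right, inner_sub_right, real_inner_comm x y,
        real_inner_self_eq_norm_sq, real_inner_self_eq_norm_sq]
      ring
    have hsplit : (x - c) + (y - c) = (x + y) - (2 : ℝ) • c := by module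
    rw [hsplit, inner_sub_left, inner_add_left, real_inner_smul_left, real_inner_smul_left]
    linarith
  have hsum : |⟪(x - c) + (y - c), x - y⟫| ≤ (R + R) * ‖x - y‖ := by
    refine (abs_real_inner_le_norm _ _).trans ?_
    gcongr
    exact norm_add_le_of_le (by rwa [← dist_eq_norm]) (by rwa [← dist_eq_norm])
  have htwo : |2 * ⟪c + (1 / 2 : ℝ) • gradient H c, x - y⟫| ≤
      δ + δ + (R + R) * ‖x - y‖ + κ * R * ‖x - y‖ := by
    rw [hid, ← Real.norm_eq_abs]
    exact norm_sub_le_of_le (norm_sub_le_of_le (norm_sub_le_of_le (mem_shell_two_one_iff.1 hx)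
      (mem_shell_two_one_iff.1 hy)) hsum) (hH.abs_apply_sub_sub_inner_le hκ hxc hyc)
  rw [abs_mul, abs_two] at htwo
  linarith

lemma HasC11Bounds.isApproxNormal_shellNormal
    (hH : HasC11Bounds (1 / 100) (1 / 100) (1 / 100) H) (hδ : δ ≤ 1 / 96) :
    IsApproxNormal 2 δ (shell 2 1 δ H) (shellNormal H) := by
  have hnorm {c : E} (hc : c ∈ shell 2 1 δ H) : 29 / 30 ≤ ‖c + (1 / 2 : ℝ) • gradient H c‖ := by
    linarith [(abs_le.1 (hH.abs_norm_add_half_gradient_sub_one_le hc)).1]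
  refine ⟨fun c hc => ?_, fun c hc x hx y hy R hxc hyc => ?_⟩
  · exact NormedSpace.norm_normalize (norm_pos_iff.1 (by linarith [hnorm hc]))
  have hinner := hH.abs_inner_add_half_gradient_le (by norm_num) hx hy hxc hyc
  have hδ₀ : 0 ≤ δ := (abs_nonneg _).trans (mem_shell_two_one_iff.1 hx)
  have hR : 0 ≤ R * ‖x - y‖ := mul_nonneg (dist_nonneg.trans hxc) (norm_nonneg _)
  rw [shellNormal, NormedSpace.normalize, real_inner_smul_left, abs_mul, abs_inv, abs_norm,
    inv_mul_eq_div, div_le_iff₀ (by linarith [hnorm hc])]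
  nlinarith [hnorm hc]

end HasC11Bounds

lemma eventually_mul_rpow_le_mul_rpow (A : ℝ) {κ p q : ℝ} (hκ : 0 < κ) (hpq : p < q) :
    ∀ᶠ ρ : ℝ in Filter.atTop, A * ρ ^ p ≤ κ * ρ ^ q := by
  have hlim : Filter.Tendsto (fun ρ : ℝ => A * ρ ^ (-(q - p))) Filter.atTop (nhds 0) := by
    simpa using (tendsto_rpow_neg_atTop (sub_pos.2 hpq)).const_mul A
  filter_upwards [hlim.eventually_le_const hκ, Filter.eventually_gt_atTop 0] with ρ h hρ
  calc A * ρ ^ p = A * ρ ^ (-(q - p)) * ρ ^ q := by rw [mul_assoc, ← Real.rpow_add hρ]; ring_nf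
    _ ≤ κ * ρ ^ q := by gcongr

lemma pow_mul_rpow_add_eq {ρ : ℝ} (hρ : 0 < ρ) (δ m ε : ℝ) {n : ℕ} (hn : 1 ≤ n) :
    ρ ^ n * ((ρ ^ (-(2 * m)) * δ) ^ 2 / (ρ ^ (-1 - ε)) ^ 4 +
        ρ ^ (-(2 * m)) * δ * (ρ ^ (-1 - ε)) ^ (n - 1)) =
      δ ^ 2 * ρ ^ (4 - 4 * m + n + 4 * ε) + δ * ρ ^ (1 - 2 * m - ε * (n - 1)) := by
  have h₁ : ρ ^ (4 - 4 * m + n + 4 * ε) = ρ ^ n * (ρ ^ (-(2 * m))) ^ 2 / (ρ ^ (-1 - ε)) ^ 4 := by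
    simp only [← Real.rpow_mul_natCast hρ.le, ← Real.rpow_natCast ρ n, ← Real.rpow_add hρ,
      ← Real.rpow_sub hρ]
    congr 1
    push_cast
    ring
  have h₂ : ρ ^ (1 - 2 * m - ε * (n - 1)) =
      ρ ^ n * ρ ^ (-(2 * m)) * (ρ ^ (-1 - ε)) ^ (n - 1) := by
    simp only [← Real.rpow_mul_natCast hρ.le, ← Real.rpow_natCast ρ n, ← Real.rpow_add hρ]
    congr 1
    push_cast [hn]
    ring
  rw [h₁, h₂]
  ring

section ShellVolume

variable {E : Type*} [NormedAddCommGroup E] [InnerProductSpace ℝ E] [FiniteDimensional ℝ E]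
  [MeasurableSpace E] [BorelSpace E] {s ρ κ ν δ : ℝ} {b : E} {G₁ G₂ H H' : E → ℝ}

lemma volume_shell_two_one_inter_le (hE : 2 ≤ finrank ℝ E) (hν₀ : 0 < ν) (hν : ν ≤ 1 / 6)
    (hb : ν ≤ ‖b‖) (hδ₀ : 0 ≤ δ) (hδ : 16 * δ ≤ ν)
    (hH : HasC11Bounds (1 / 100) (1 / 100) (1 / 100) H)
    (hH' : HasC11Bounds (1 / 100) (1 / 100) (1 / 100) H')
    (hdiff : ∀ x, |H x - H' (x - b)| ≤ 1 / 100 * ‖b‖)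
    (hgrad : ∀ x, ‖gradient H x - gradient H' (x - b)‖ ≤ 1 / 100 * ‖b‖) :
    volume (shell 2 1 δ H ∩ (· - b) ⁻¹' shell 2 1 δ H') ≤ ENNReal.ofReal
      (16 ^ 4 * 2 ^ 4 * 6 ^ finrank ℝ E * (δ ^ 2 / ν ^ 4 + δ * ν ^ (finrank ℝ E - 1))) := by
  have hnear {H : E → ℝ} (hH : HasC11Bounds (1 / 100) (1 / 100) (1 / 100) H) {x y : E}
      (hx : x ∈ shell 2 1 δ H) (hy : y ∈ shell 2 1 δ H) :
      ‖shellNormal H x - shellNormal H y - (x - y)‖ ≤ (‖x - y‖ + ν) / 4 :=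
    (hH.norm_shellNormal_sub_sub_le (by linarith) hH (hH.abs_apply_sub_le x y)
      (hH.norm_gradient_sub_le x y) hx hy).trans (by linarith)
  refine IsApproxNormal.volume_le hE
    ((hH.isApproxNormal_shellNormal (by linarith)).mono inter_subset_left)
    (((hH'.isApproxNormal_shellNormal (by linarith)).comp_sub_right b).mono inter_subset_right)
    one_le_two hν₀ (by linarith) hδ₀
    (inter_subset_left.trans (shell_two_one_subset_closedBall hH.abs_apply_le (by linarith)))
    (fun x hx y hy => hnear hH hx.1 hy.1)
    (fun x hx y hy => by simpa using hnear hH' hx.2 hy.2) fun x hx => ?_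
  have htrans := hH.norm_shellNormal_sub_sub_le (y := x) (z := x - b) (by linarith) hH'
    (by simpa using hdiff x) (by simpa using hgrad x) hx.1 hx.2
  rw [sub_sub_cancel, norm_sub_rev] at htrans
  linarith [norm_le_norm_add_norm_sub' b (shellNormal H x - shellNormal H' (x - b))]

lemma volume_shell_one_inter_le (hE : 2 ≤ finrank ℝ E) {L : ℝ}
    (hs : 0 < s) (hL : RpowBounds (2 / s) L) (hκ : 200 * (L * κ) ≤ 1)
    (hν₀ : 0 < ν) (hν : ν ≤ κ) (hb : ν ≤ ‖b‖) (hδ₀ : 0 ≤ δ) (hδ : δ ≤ κ * ν)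
    (h₁ : HasC11Bounds κ κ κ G₁) (h₂ : HasC11Bounds κ κ κ G₂)
    (hdiff : ∀ x, |G₁ x - G₂ (x - b)| ≤ κ * ‖b‖)
    (hgrad : ∀ x, ‖gradient G₁ x - gradient G₂ (x - b)‖ ≤ κ * ‖b‖) :
    volume (shell s 1 δ G₁ ∩ (· - b) ⁻¹' shell s 1 δ G₂) ≤ ENNReal.ofReal
      (16 ^ 4 * 2 ^ 4 * 6 ^ finrank ℝ E * L ^ 2 *
        (δ ^ 2 / ν ^ 4 + δ * ν ^ (finrank ℝ E - 1))) := by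
  have hL₁ := hL.one_le
  have hκ₀ : 0 < κ := hν₀.trans_le hν
  have hκ₁ : κ ≤ 1 / 200 := by nlinarith
  have hδν : 200 * (L * δ) ≤ ν := by nlinarith
  have hhalf {G : E → ℝ} (hG : HasC11Bounds κ κ κ G) (x : E) : |G x| ≤ 1 / 2 :=
    (hG.abs_apply_le x).trans (by linarith)
  have hbounds {G : E → ℝ} (hG : HasC11Bounds κ κ κ G) :
      HasC11Bounds (1 / 100) (1 / 100) (1 / 100) (quadraticPerturbation s G) :=
    (hG.quadraticPerturbation (by linarith) hL).mono (by linarith) (by linarith) (by nlinarith)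
  have hshell {G : E → ℝ} (hG : HasC11Bounds κ κ κ G) :
      shell s 1 δ G ⊆ shell 2 1 (L * δ) (quadraticPerturbation s G) :=
    shell_one_subset_shell_two_one hs hL fun x => by nlinarith [hG.abs_apply_le x]
  have hdiff' (x : E) : |quadraticPerturbation s G₁ x - quadraticPerturbation s G₂ (x - b)| ≤
      1 / 100 * ‖b‖ := by
    refine (hL.abs_quadraticPerturbation_sub_le (hhalf h₁ _) (hhalf h₂ _)).trans ?_
    nlinarith [hdiff x, norm_nonneg b]
  have hgrad' (x : E) : ‖gradient (quadraticPerturbation s G₁) x -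
      gradient (quadraticPerturbation s G₂) (x - b)‖ ≤ 1 / 100 * ‖b‖ :=
    calc _ ≤ L * (κ * ‖b‖ + κ * ‖b‖ * κ) :=
          (hL.norm_gradient_quadraticPerturbation_sub_le (h₁.differentiable _)
            (h₂.differentiable _) (hhalf h₁ _) (hhalf h₂ _)).trans
            (by gcongr; exacts [hgrad x, hdiff x, h₂.norm_gradient_le _])
      _ = L * κ * (1 + κ) * ‖b‖ := by ring
      _ ≤ 1 / 100 * ‖b‖ := by gcongr; nlinarith
  refine (measure_mono (inter_subset_inter (hshell h₁) (preimage_mono (hshell h₂)))).trans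
    ((volume_shell_two_one_inter_le hE hν₀ (by linarith) hb (by positivity) (by linarith)
      (hbounds h₁) (hbounds h₂) hdiff' hgrad').trans (ENNReal.ofReal_le_ofReal ?_))
  have hLL : L ≤ L ^ 2 := le_self_pow₀ hL₁ two_ne_zero
  rw [mul_assoc _ (L ^ 2), mul_add (L ^ 2), mul_pow, mul_div_assoc, mul_assoc L]
  gcongr

lemma exists_volume_shell_one_inter_le (hE : 2 ≤ finrank ℝ E) (hs : 0 < s) :
    ∃ κ C : ℝ, 0 < κ ∧ 0 < C ∧ ∀ (ν δ : ℝ) (b : E) (G₁ G₂ : E → ℝ),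
      0 < ν → ν ≤ κ → ν ≤ ‖b‖ → 0 ≤ δ → δ ≤ κ * ν →
      HasC11Bounds κ κ κ G₁ → HasC11Bounds κ κ κ G₂ →
      (∀ x, |G₁ x - G₂ (x - b)| ≤ κ * ‖b‖) →
      (∀ x, ‖gradient G₁ x - gradient G₂ (x - b)‖ ≤ κ * ‖b‖) →
      volume (shell s 1 δ G₁ ∩ (· - b) ⁻¹' shell s 1 δ G₂) ≤
        ENNReal.ofReal (C * (δ ^ 2 / ν ^ 4 + δ * ν ^ (finrank ℝ E - 1))) := by
  obtain ⟨L, hL⟩ := exists_rpowBounds (2 / s)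
  have hL₀ : 0 < L := zero_lt_one.trans_le hL.one_le
  refine ⟨1 / (200 * L), 16 ^ 4 * 2 ^ 4 * 6 ^ finrank ℝ E * L ^ 2, by positivity, by positivity,
    fun ν δ b G₁ G₂ => volume_shell_one_inter_le hE hs hL (le_of_eq ?_)⟩
  field_simp

lemma volume_shell_inter_eq (hρ : 0 < ρ) (b : E) (G₁ G₂ : E → ℝ) :
    volume (shell s ρ δ G₁ ∩ (· - ρ • b) ⁻¹' shell s ρ δ G₂) =
      ENNReal.ofReal (ρ ^ finrank ℝ E) *
        volume (shell s 1 (ρ ^ (-s) * δ) (unitRescale s ρ G₁) ∩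
          (· - b) ⁻¹' shell s 1 (ρ ^ (-s) * δ) (unitRescale s ρ G₂)) := by
  rw [← Measure.addHaar_smul_of_nonneg volume hρ.le]
  congr 1
  ext x
  obtain ⟨y, rfl⟩ : ∃ y, x = ρ • y := ⟨ρ⁻¹ • x, (smul_inv_smul₀ hρ.ne' x).symm⟩
  rw [smul_mem_smul_set_iff₀ hρ.ne', mem_inter_iff, mem_inter_iff, mem_preimage, mem_preimage,
    ← smul_sub, smul_mem_shell_iff hρ, smul_mem_shell_iff hρ]

lemma exists_volume_shell_inter_le (hE : 2 ≤ finrank ℝ E) (hs : 0 < s) :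
    ∃ κ C : ℝ, 0 < κ ∧ 0 < C ∧ ∀ (ρ ν δ : ℝ) (b : E) (G₁ G₂ : E → ℝ),
      0 < ρ → 0 < ν → ν ≤ κ → ρ * ν ≤ ‖b‖ → 0 ≤ δ → ρ ^ (-s) * δ ≤ κ * ν →
      HasC11Bounds (κ * ρ ^ s) (κ * ρ ^ (s - 1)) (κ * ρ ^ (s - 2)) G₁ →
      HasC11Bounds (κ * ρ ^ s) (κ * ρ ^ (s - 1)) (κ * ρ ^ (s - 2)) G₂ →
      (∀ ξ, |G₁ ξ - G₂ (ξ - b)| ≤ κ * ρ ^ (s - 1) * ‖b‖) →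
      (∀ ξ, ‖gradient G₁ ξ - gradient G₂ (ξ - b)‖ ≤ κ * ρ ^ (s - 2) * ‖b‖) →
      volume (shell s ρ δ G₁ ∩ (· - b) ⁻¹' shell s ρ δ G₂) ≤
        ENNReal.ofReal (C * (ρ ^ finrank ℝ E * ((ρ ^ (-s) * δ) ^ 2 / ν ^ 4 +
          ρ ^ (-s) * δ * ν ^ (finrank ℝ E - 1)))) := by
  obtain ⟨κ, C, hκ, hC, hunit⟩ := exists_volume_shell_one_inter_le hE hs
  refine ⟨κ, C, hκ, hC, fun ρ ν δ b G₁ G₂ hρ hν hνκ hb hδ hδν h₁ h₂ hdiff hgrad => ?_⟩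
  obtain ⟨b, rfl⟩ : ∃ y, b = ρ • y := ⟨ρ⁻¹ • b, (smul_inv_smul₀ hρ.ne' b).symm⟩
  rw [norm_smul, Real.norm_of_nonneg hρ.le] at hb hdiff hgrad
  have hcancel (p q : ℝ) (h : p + q = 0) (a : ℝ) : ρ ^ p * (a * ρ ^ q) = a := by
    rw [mul_left_comm, ← Real.rpow_add hρ, h, Real.rpow_zero, mul_one]
  have hbounds {G : E → ℝ}
      (hG : HasC11Bounds (κ * ρ ^ s) (κ * ρ ^ (s - 1)) (κ * ρ ^ (s - 2)) G) :
      HasC11Bounds κ κ κ (unitRescale s ρ G) :=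
    (hG.unitRescale hρ).mono (hcancel _ _ (by ring) κ).le (hcancel _ _ (by ring) κ).le
      (hcancel _ _ (by ring) κ).le
  have hdiff' (x : E) : |unitRescale s ρ G₁ x - unitRescale s ρ G₂ (x - b)| ≤ κ * ‖b‖ := by
    rw [unitRescale, unitRescale, smul_sub, ← mul_sub, abs_mul, abs_of_pos (by positivity)]
    calc _ ≤ ρ ^ (-s) * (κ * ρ ^ (s - 1) * (ρ * ‖b‖)) := by gcongr; exact hdiff _
      _ = ρ ^ (-s) * (κ * ‖b‖ * ρ ^ (s - 1 + 1)) := by rw [Real.rpow_add_one hρ.ne']; ring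
      _ = κ * ‖b‖ := hcancel _ _ (by ring) _
  have hgrad' (x : E) : ‖gradient (unitRescale s ρ G₁) x -
      gradient (unitRescale s ρ G₂) (x - b)‖ ≤ κ * ‖b‖ := by
    rw [(hasGradientAt_unitRescale hρ (h₁.differentiable _)).gradient,
      (hasGradientAt_unitRescale hρ (h₂.differentiable _)).gradient, smul_sub, ← smul_sub,
      norm_smul, Real.norm_of_nonneg (by positivity)]
    calc _ ≤ ρ ^ (1 - s) * (κ * ρ ^ (s - 2) * (ρ * ‖b‖)) := by gcongr; exact hgrad _
      _ = ρ ^ (1 - s) * (κ * ‖b‖ * ρ ^ (s - 2 + 1)) := by rw [Real.rpow_add_one hρ.ne']; ring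
      _ = κ * ‖b‖ := hcancel _ _ (by ring) _
  rw [volume_shell_inter_eq hρ, mul_left_comm C, ENNReal.ofReal_mul (by positivity)]
  gcongr
  exact hunit ν _ b _ _ hν hνκ (le_of_mul_le_mul_left hb hρ) (by positivity) hδν (hbounds h₁)
    (hbounds h₂) hdiff' hgrad'

theorem volume_intersection_upper_bound_general (hE : 2 ≤ finrank ℝ E) {m : ℝ} (hm : 0 < m) :
    ∃ ε₀ C : ℝ, 0 < ε₀ ∧ 0 < C ∧ ∀ γ σ ω A ε : ℝ,
      γ < 2 * m → σ < 2 * m - 1 → ω < 2 * m - 2 → -1 < ε →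
      ∃ ρ₀, 1 ≤ ρ₀ ∧ ∀ ρ, ρ₀ ≤ ρ →
      ∀ δ, 0 ≤ δ → δ * ρ ^ (1 - 2 * m + ε) ≤ ε₀ →
      ∀ b : E, ρ ^ (-ε) ≤ ‖b‖ →
      ∀ G₁ G₂ : E → ℝ,
        HasC11Bounds (A * ρ ^ γ) (A * ρ ^ σ) (A * ρ ^ ω) G₁ →
        HasC11Bounds (A * ρ ^ γ) (A * ρ ^ σ) (A * ρ ^ ω) G₂ →
        (∀ ξ, |G₁ ξ - G₂ (ξ - b)| ≤ A * ‖b‖ * ρ ^ σ) →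
        (∀ ξ, ‖gradient G₁ ξ - gradient G₂ (ξ - b)‖ ≤ A * ‖b‖ * ρ ^ ω) →
        volume (shell (2 * m) ρ δ G₁ ∩ (· - b) ⁻¹' shell (2 * m) ρ δ G₂) ≤
          ENNReal.ofReal (C * (δ ^ 2 * ρ ^ (4 - 4 * m + finrank ℝ E + 4 * ε) +
            δ * ρ ^ (1 - 2 * m - ε * (finrank ℝ E - 1)))) := by
  obtain ⟨κ, C, hκ, hC, hvol⟩ := exists_volume_shell_inter_le hE (s := 2 * m) (by linarith)
  refine ⟨κ, C, hκ, hC, fun γ σ ω A ε hγ hσ hω hε => ?_⟩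
  obtain ⟨ρ₀, hρ₀⟩ := Filter.eventually_atTop.1 <| (Filter.eventually_ge_atTop (1 : ℝ)).and <|
    (eventually_mul_rpow_le_mul_rpow A hκ hγ).and <|
    (eventually_mul_rpow_le_mul_rpow A hκ hσ).and <|
    (eventually_mul_rpow_le_mul_rpow A hκ hω).and <|
    eventually_mul_rpow_le_mul_rpow 1 hκ (by linarith : -1 - ε < 0)
  refine ⟨ρ₀, (hρ₀ ρ₀ le_rfl).1, fun ρ hρ δ hδ hδκ b hb G₁ G₂ h₁ h₂ hdiff hgrad => ?_⟩
  obtain ⟨hρ_one, hA₀, hA₁, hA₂, hν⟩ := hρ₀ ρ hρ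
  have hρ_pos : 0 < ρ := zero_lt_one.trans_le hρ_one
  have hνb : ρ * ρ ^ (-1 - ε) ≤ ‖b‖ := by
    rwa [mul_comm, ← Real.rpow_add_one hρ_pos.ne', sub_add_eq_add_sub, neg_add_cancel, zero_sub]
  have hδν : ρ ^ (-(2 * m)) * δ ≤ κ * ρ ^ (-1 - ε) :=
    calc _ = δ * ρ ^ (1 - 2 * m + ε) * ρ ^ (-1 - ε) := by
          rw [mul_assoc, ← Real.rpow_add hρ_pos, mul_comm δ]
          ring_nf
      _ ≤ κ * ρ ^ (-1 - ε) := by gcongr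
  rw [← pow_mul_rpow_add_eq hρ_pos δ m ε (by omega)]
  refine hvol ρ _ δ b G₁ G₂ hρ_pos (by positivity) (by simpa using hν) hνb hδ hδν
    (h₁.mono hA₀ hA₁ hA₂) (h₂.mono hA₀ hA₁ hA₂) (fun ξ => (hdiff ξ).trans ?_)
    fun ξ => (hgrad ξ).trans ?_ <;> rw [mul_right_comm] <;> gcongr

end ShellVolume

/-- Theorem 9.2: under the stated C² conditions on G₁, G₂, the volume of
𝒳 = 𝒜(g₁;ρ,δ) ∩ (𝒜(g₂;ρ,δ) + b), with g_j(ξ) = |ξ|^{2m} + G_j(ξ), satisfies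
vol(𝒳) ≤ C (δ² ρ^{4−4m+d+6ε} + δ ρ^{1−2m−ε(d−1)}). -/
theorem volume_intersection_upper_bound
    (d : ℕ) (hd : 2 ≤ d) (m γ σ ω A K ε : ℝ)
    (hm : 0 < m) (hγ : γ < 2 * m) (hσ : σ < 2 * m - 1) (hω : ω < 2 * m - 2)
    (hA : 0 < A) (hK : 1 ≤ K) (hε : 0 < ε) :
    ∃ ε₀ C c₂ ρ₀ : ℝ, 0 < ε₀ ∧ 0 < C ∧ 1 ≤ c₂ ∧ 1 ≤ ρ₀ ∧
      ∀ ρ : ℝ, ρ₀ ≤ ρ →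
      ∀ δ : ℝ, 0 < δ → δ * ρ ^ (2 - 2 * m + 2 * ε) ≤ ε₀ →
      ∀ b : EuclideanSpace ℝ (Fin d), c₂ ≤ ‖b‖ → ‖b‖ ≤ K * ρ →
      ∀ G₁ G₂ : EuclideanSpace ℝ (Fin d) → ℝ,
        ContDiff ℝ 2 G₁ → ContDiff ℝ 2 G₂ →
        (∀ ξ, |G₁ ξ| ≤ A * ρ ^ γ) → (∀ ξ, |G₂ ξ| ≤ A * ρ ^ γ) →
        (∀ ξ, ‖gradient G₁ ξ‖ ≤ A * ρ ^ σ) → (∀ ξ, ‖gradient G₂ ξ‖ ≤ A * ρ ^ σ) →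
        (∀ ξ, ‖fderiv ℝ (fderiv ℝ G₁) ξ‖ ≤ A * ρ ^ ω) →
        (∀ ξ, ‖fderiv ℝ (fderiv ℝ G₂) ξ‖ ≤ A * ρ ^ ω) →
        (∀ ξ, |G₁ ξ - G₂ (ξ - b)| ≤ A * ‖b‖ * ρ ^ σ) →
        (∀ ξ, ‖gradient G₁ ξ - gradient G₂ (ξ - b)‖ ≤ A * ‖b‖ * ρ ^ ω) →
        MeasureTheory.volume
          {ξ : EuclideanSpace ℝ (Fin d) |
            (ρ ^ (2 * m) - δ ≤ ‖ξ‖ ^ (2 * m) + G₁ ξ ∧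
              ‖ξ‖ ^ (2 * m) + G₁ ξ ≤ ρ ^ (2 * m) + δ) ∧
            (ρ ^ (2 * m) - δ ≤ ‖ξ - b‖ ^ (2 * m) + G₂ (ξ - b) ∧
              ‖ξ - b‖ ^ (2 * m) + G₂ (ξ - b) ≤ ρ ^ (2 * m) + δ)} ≤
        ENNReal.ofReal
          (C * (δ ^ 2 * ρ ^ (4 - 4 * m + (d : ℝ) + 6 * ε) +
            δ * ρ ^ (1 - 2 * m - ε * ((d : ℝ) - 1)))) := by
  obtain ⟨ε₀, C, hε₀, hC, h⟩ := volume_intersection_upper_bound_general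
    (E := EuclideanSpace ℝ (Fin d)) (by rwa [finrank_euclideanSpace_fin]) hm
  obtain ⟨ρ₀, hρ₀, hvol⟩ := h γ σ ω A ε hγ hσ hω (by linarith)
  refine ⟨ε₀, C, 1, ρ₀, hε₀, hC, le_rfl, hρ₀, fun ρ hρ δ hδ hδε b hb _ G₁ G₂ hc₁ hc₂ h₁ h₂ hg₁ hg₂
    hh₁ hh₂ hdiff hgrad => ?_⟩
  have hρ₁ : 1 ≤ ρ := hρ₀.trans hρ
  have hρb : ρ ^ (-ε) ≤ ‖b‖ := (Real.rpow_le_one_of_one_le_of_nonpos hρ₁ (by linarith)).trans hb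
  have hδ' : δ * ρ ^ (1 - 2 * m + ε) ≤ ε₀ := hδε.trans' (by gcongr 2; linarith)
  refine (hvol ρ hρ δ hδ.le hδ' b hρb G₁ G₂ (.of_contDiff hc₁ h₁ hg₁ hh₁)
    (.of_contDiff hc₂ h₂ hg₂ hh₂) hdiff hgrad).trans (ENNReal.ofReal_le_ofReal ?_)
  rw [finrank_euclideanSpace_fin]
  gcongr
  linarith
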